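/- Let g ≥ 3 and n ≥ 1 be integers and let d_1,…,d_n be integers with d_1+⋯+d_n = 0. Consider rational numbers c_1,…,c_n, and a rational number e(h,P) for every pair (h,P) with 0 ≤ h ≤ g and P ⊆ {1,…,n} such that |P| ≥ 2 if h = 0 and |P^c| ≥ 2 if h = g, satisfying the symmetry e(h,P) = e(g−h,P^c). Then the system of linear equations — (i) for every i ∈ {1,…,n}: (2g−2)·c_i + Σ_{j≠i} e(0,{i,j}) = g·d_i²; (ii) for every P ⊆ {1,…,n} with |P| ≥ 2: (2g−2)·Σ_{i∈P} c_i + (2 − 2g − (n−|P|))·e(0,P) + Σ_{j∉P} e(0,P∪{j}) = g·d_P²; (iii) for every pair (h,P) with 1 ≤ h ≤ g−1, P ⊆ {1,…,n}, and (h,P) ≠ (g−1,{1,…,n}): Σ_{i∉P} c_i + (2 − 2(g−h) − (n−|P|))·e(h,P) + Σ_{j∉P} e(h,P∪{j}) = (g−h)·d_P² — has exactly one solution, namely c_i = d_i²/2 for all i, e(0,P) = −(d_P² − Σ_{i∈P} d_i²)/2, and e(h,P) = −d_P²/2 for 1 ≤ h ≤ g−1 (with e(g,P) = e(0,P^c)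 determined by symmetry). -/

import Mathlib

open Finset

/-!
Subtracting the asserted values from the unknowns turns the system into the homogeneous one, because
`P ↦ d_P²` behaves well under `Δ f P = ∑ j ∉ P, (f (P ∪ {j}) - f P)`: as `d` has sum zero,
`Δ (d_P²) = ∑ j ∉ P, d_j² - 2 d_P²`.

In the homogeneous system, the equations with `1 ≤ h ≤ g - 2` read
`(a + Δ) e(h, P) = -∑ j ∉ P, c_j` with `a = 2 - 2 (g - h) < 0`. The operator `a + Δ` is triangular
for inclusion with diagonal entries `a - |Pᶜ| ≠ 0`, and `P ↦ ∑ j ∉ P, c_j` is an eigenvector of `Δ`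
with eigenvalue `-1`, so `(2 (g - h) - 1) e(h, P) = ∑ j ∉ P, c_j`. Taking `h = 1` and using the
symmetry, this determines `e(g - 1, P)`, and the equations with `h = g - 1`, where `a = 0`, then
give `(2 g - 2) c_i = 0`. Finally `c = 0` leaves `(a + Δ) e(0, P) = 0` with `a = 2 - 2 g`.
-/

lemma cast_card_compl {ι R : Type*} [Fintype ι] [DecidableEq ι] [AddGroupWithOne R]
    (P : Finset ι) : (#Pᶜ : R) = Fintype.card ι - #P := by
  rw [card_compl, Nat.cast_sub (card_le_univ P)]

lemma sum_compl_eq_neg_sum {ι M : Type*} [Fintype ι] [DecidableEq ι] [AddCommGroup M] {d : ι → M}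
    (hd : ∑ i, d i = 0) (P : Finset ι) : ∑ i ∈ Pᶜ, d i = -∑ i ∈ P, d i :=
  eq_neg_of_add_eq_zero_right <| (sum_add_sum_compl P d).trans hd

lemma two_sub_two_mul_cast_ne_cast {R : Type*} [Ring R] [CharZero R] {k : ℕ} (hk : 2 ≤ k)
    (m : ℕ) : 2 - 2 * (k : R) ≠ m := by
  intro h
  have : 2 = m + 2 * k := by exact_mod_cast sub_eq_iff_eq_add.mp h
  omega

section InsertDiff

variable {ι R : Type*} [Fintype ι] [DecidableEq ι] [CommRing R]

/-- The upward Laplacian of the Boolean lattice of subsets of `ι`: the sum of the increments of `f`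
along all edges leaving `P` upwards. As `Z_h^P · δ_h^P = 2 - 2 (g - h) - |Pᶜ|`, the intersection
number of `Z_h^P` with `∑_Q f(Q) δ_h^Q` is `(2 - 2 (g - h)) * f P + insertDiff f P`. -/
def insertDiff : (Finset ι → R) →ₗ[R] Finset ι → R where
  toFun f P := ∑ j ∈ Pᶜ, (f (insert j P) - f P)
  map_add' f₁ f₂ := by
    ext P
    simp only [Pi.add_apply, add_sub_add_comm, sum_add_distrib]
  map_smul' r f := by
    ext P
    simp only [Pi.smul_apply, smul_eq_mul, ← mul_sub, ← mul_sum, RingHom.id_apply]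

lemma insertDiff_apply (f : Finset ι → R) (P : Finset ι) :
    insertDiff f P = ∑ j ∈ Pᶜ, (f (insert j P) - f P) := rfl

lemma sub_card_mul_add_sum_insert (a : R) (f : Finset ι → R) (P : Finset ι) :
    (a - ((Fintype.card ι : R) - #P)) * f P + ∑ j ∈ Pᶜ, f (insert j P) =
      a * f P + insertDiff f P := by
  rw [insertDiff_apply, sum_sub_distrib, sum_const, nsmul_eq_mul, cast_card_compl]
  ring

lemma insertDiff_sum (w : ι → R) (P : Finset ι) :
    insertDiff (fun Q ↦ ∑ i ∈ Q, w i) P = ∑ i ∈ Pᶜ, w i := by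
  refine sum_congr rfl fun j hj ↦ ?_
  beta_reduce
  rw [sum_insert (mem_compl.mp hj), add_sub_cancel_right]

lemma insertDiff_sum_compl (w : ι → R) (P : Finset ι) :
    insertDiff (fun Q ↦ ∑ i ∈ Qᶜ, w i) P = -∑ i ∈ Pᶜ, w i := by
  rw [insertDiff_apply, ← sum_neg_distrib]
  refine sum_congr rfl fun j hj ↦ ?_
  rw [compl_insert, ← add_sum_erase _ _ hj]
  ring

lemma insertDiff_sq_sum {d : ι → R} (hd : ∑ i, d i = 0) (P : Finset ι) :
    insertDiff (fun Q ↦ (∑ i ∈ Q, d i) ^ 2) P = ∑ i ∈ Pᶜ, d i ^ 2 - 2 * (∑ i ∈ P, d i) ^ 2 := by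
  have increment : ∀ j ∈ Pᶜ, (∑ i ∈ insert j P, d i) ^ 2 - (∑ i ∈ P, d i) ^ 2 =
      d j ^ 2 + 2 * (∑ i ∈ P, d i) * d j := by
    intro j hj
    rw [sum_insert (mem_compl.mp hj)]
    ring
  rw [insertDiff_apply, sum_congr rfl increment, sum_add_distrib, ← mul_sum,
    sum_compl_eq_neg_sum hd]
  ring

lemma eq_zero_of_mul_add_insertDiff_eq_zero [NoZeroDivisors R] {a : R} (ha : ∀ m : ℕ, a ≠ m)
    {f : Finset ι → R} {S : Set (Finset ι)} (hS : IsUpperSet S)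
    (hf : ∀ P ∈ S, a * f P + insertDiff f P = 0) {P : Finset ι} (hP : P ∈ S) : f P = 0 := by
  induction P using WellFoundedGT.induction with
  | ind P ih =>
    have supersets_vanish : ∑ j ∈ Pᶜ, f (insert j P) = 0 := sum_eq_zero fun j hj ↦
      ih _ (ssubset_insert (mem_compl.mp hj)) (hS (subset_insert j P) hP)
    have diagonal : (a - #Pᶜ) * f P = 0 := by
      rw [← hf P hP, ← sub_card_mul_add_sum_insert, supersets_vanish, cast_card_compl, add_zero]
    exact (mul_eq_zero.mp diagonal).resolve_left (sub_ne_zero.mpr (ha _))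

end InsertDiff

section HomogeneousSystem

variable {ι R : Type*} [Fintype ι] [DecidableEq ι] [CommRing R]

/-- The equations saying that the class `∑ c_i K_i + ∑ e(h, P) δ_h^P` has intersection number zero
with the test curves `Z_i`, `Z_0^P` and `Z_h^P`, in this order. -/
structure HomogeneousSystem (g : ℕ) (c : ι → R) (e : ℕ → Finset ι → R) : Prop where
  point : ∀ i, (2 * (g : R) - 2) * c i + ∑ j ∈ univ \ {i}, e 0 {i, j} = 0
  genus_zero : ∀ P : Finset ι, 2 ≤ #P →
    (2 * (g : R) - 2) * ∑ i ∈ P, c i + ((2 - 2 * (g : R)) * e 0 P + insertDiff (e 0) P) = 0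
  genus_pos : ∀ (h : ℕ) (P : Finset ι), 1 ≤ h → h ≤ g - 1 → ¬(h = g - 1 ∧ P = univ) →
    ∑ i ∈ Pᶜ, c i + ((2 - 2 * ((g : R) - h)) * e h P + insertDiff (e h) P) = 0

namespace HomogeneousSystem

variable [NoZeroDivisors R] [CharZero R] {g : ℕ} {c : ι → R} {e : ℕ → Finset ι → R}

lemma mul_eq_sum_compl (H : HomogeneousSystem g c e) {h : ℕ} (h_pos : 1 ≤ h) (h_le : h + 2 ≤ g)
    (P : Finset ι) : (2 * ((g : R) - h) - 1) * e h P = ∑ i ∈ Pᶜ, c i := by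
  set b : R := 2 * ((g : R) - h) - 1 with hb
  have ha (m : ℕ) : 2 - 2 * ((g : R) - h) ≠ m := by
    rw [← Nat.cast_sub (by omega)]
    exact two_sub_two_mul_cast_ne_cast (by omega) m
  let f : Finset ι → R := b • e h - fun Q ↦ ∑ i ∈ Qᶜ, c i
  have hf (Q : Finset ι) : (2 - 2 * ((g : R) - h)) * f Q + insertDiff f Q = 0 := by
    simp only [f, map_sub, map_smul, Pi.sub_apply, Pi.smul_apply, smul_eq_mul,
      insertDiff_sum_compl]
    linear_combination b * H.genus_pos h Q h_pos (by omega) (by omega) - (∑ i ∈ Qᶜ, c i) * hb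
  exact sub_eq_zero.mp <|
    eq_zero_of_mul_add_insertDiff_eq_zero ha isUpperSet_univ (fun Q _ ↦ hf Q) (Set.mem_univ P)

lemma mul_last_eq_sum (H : HomogeneousSystem g c e) (hg : 3 ≤ g)
    (hsym : ∀ P, e 1 P = e (g - 1) Pᶜ) (P : Finset ι) :
    (2 * (g : R) - 3) * e (g - 1) P = ∑ i ∈ P, c i := by
  have h_one := H.mul_eq_sum_compl le_rfl hg Pᶜ
  rw [hsym, compl_compl, Nat.cast_one] at h_one
  linear_combination h_one

lemma c_eq_zero (H : HomogeneousSystem g c e) (hg : 3 ≤ g)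
    (hsym : ∀ P, e 1 P = e (g - 1) Pᶜ) : c = 0 := by
  ext i
  have last_eq : c i + insertDiff (e (g - 1)) {i}ᶜ = 0 := by
    have h_last := H.genus_pos (g - 1) {i}ᶜ (by omega) le_rfl (by simp)
    rw [compl_compl, sum_singleton, Nat.cast_pred (by omega)] at h_last
    linear_combination h_last
  have insertDiff_last : (2 * (g : R) - 3) * insertDiff (e (g - 1)) {i}ᶜ = c i := by
    have h_smul : (2 * (g : R) - 3) • e (g - 1) = fun Q ↦ ∑ i ∈ Q, c i :=
      funext (H.mul_last_eq_sum hg hsym)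
    rw [← smul_eq_mul, ← Pi.smul_apply, ← map_smul, h_smul, insertDiff_sum, compl_compl,
      sum_singleton]
  have h_mul : (2 - 2 * (g : R)) * c i = 0 := by
    linear_combination insertDiff_last - (2 * (g : R) - 3) * last_eq
  refine (mul_eq_zero.mp h_mul).resolve_left ?_
  exact_mod_cast two_sub_two_mul_cast_ne_cast (R := R) (k := g) (by omega) 0

lemma e_zero_eq_zero (H : HomogeneousSystem g c e) (hg : 2 ≤ g) (hc : c = 0) {P : Finset ι}
    (hP : 2 ≤ #P) : e 0 P = 0 := by
  have h_upper : IsUpperSet {Q : Finset ι | 2 ≤ #Q} :=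
    fun _ _ hQ h ↦ h.trans (card_le_card hQ)
  refine eq_zero_of_mul_add_insertDiff_eq_zero (two_sub_two_mul_cast_ne_cast hg) h_upper
    (fun Q hQ ↦ ?_) hP
  simpa only [hc, Pi.zero_apply, sum_const_zero, mul_zero, zero_add] using H.genus_zero Q hQ

lemma e_eq_zero_of_add_two_le (H : HomogeneousSystem g c e) (hc : c = 0) {h : ℕ}
    (h_pos : 1 ≤ h) (h_le : h + 2 ≤ g) (P : Finset ι) : e h P = 0 := by
  have h_mul : (2 * ((g : R) - h) - 1) * e h P = 0 := by
    simpa only [hc, Pi.zero_apply, sum_const_zero] using H.mul_eq_sum_compl h_pos h_le P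
  refine (mul_eq_zero.mp h_mul).resolve_left fun h_zero ↦ ?_
  apply two_sub_two_mul_cast_ne_cast (R := R) (k := g - h) (by omega) 1
  rw [Nat.cast_sub (by omega), Nat.cast_one]
  linear_combination -h_zero

theorem iff_eq_zero (hg : 3 ≤ g) (hsym : ∀ P, e 1 P = e (g - 1) Pᶜ) :
    HomogeneousSystem g c e ↔
      (∀ i, c i = 0) ∧ (∀ P : Finset ι, 2 ≤ #P → e 0 P = 0) ∧
        ∀ (h : ℕ) (P : Finset ι), 1 ≤ h → h ≤ g - 1 → e h P = 0 := by
  constructor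
  · intro H
    have hc : c = 0 := H.c_eq_zero hg hsym
    refine ⟨congrFun hc, fun P hP ↦ H.e_zero_eq_zero (by omega) hc hP, fun h P h_pos h_le ↦ ?_⟩
    obtain h_lt | rfl := h_le.lt_or_eq
    · exact H.e_eq_zero_of_add_two_le hc h_pos (by omega) P
    · rw [← compl_compl P, ← hsym]
      exact H.e_eq_zero_of_add_two_le hc le_rfl hg Pᶜ
  · rintro ⟨hc, he_zero, he_pos⟩
    refine ⟨fun i ↦ ?_, fun P hP ↦ ?_, fun h P h_pos h_le _ ↦ ?_⟩
    · have pairs_vanish : ∀ j ∈ univ \ {i}, e 0 {i, j} = 0 := fun j hj ↦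
        he_zero _ (card_pair (by grind)).ge
      rw [hc, sum_eq_zero pairs_vanish, mul_zero, add_zero]
    · have insert_vanish : ∀ j ∈ Pᶜ, e 0 (insert j P) - e 0 P = 0 := fun j _ ↦ by
        rw [he_zero _ (hP.trans (card_le_card (subset_insert j P))), he_zero P hP, sub_zero]
      rw [sum_eq_zero fun i _ ↦ hc i, he_zero P hP, insertDiff_apply, sum_eq_zero insert_vanish,
        mul_zero, mul_zero, add_zero, add_zero]
    · simp only [insertDiff_apply, hc, he_pos h _ h_pos h_le, sub_zero, sum_const_zero, mul_zero,
        add_zero]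

end HomogeneousSystem

end HomogeneousSystem

section IntersectionSystem

variable {ι R : Type*} [Fintype ι] [DecidableEq ι] [CommRing R]

/-- The equations saying that the class `∑ c_i K_i + ∑ e(h, P) δ_h^P` has the same intersection
numbers as `[s_d^*T]` with the test curves `Z_i`, `Z_0^P` and `Z_h^P`, in this order. -/
def IntersectionSystem (g : ℕ) (d c : ι → R) (e : ℕ → Finset ι → R) : Prop :=
  (∀ i, (2 * (g : R) - 2) * c i + ∑ j ∈ univ \ {i}, e 0 {i, j} = (g : R) * d i ^ 2) ∧
  (∀ P : Finset ι, 2 ≤ #P →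
    (2 * (g : R) - 2) * ∑ i ∈ P, c i
      + (2 - 2 * (g : R) - ((Fintype.card ι : R) - (#P : R))) * e 0 P
      + ∑ j ∈ Pᶜ, e 0 (insert j P) = (g : R) * (∑ i ∈ P, d i) ^ 2) ∧
  (∀ (h : ℕ) (P : Finset ι), 1 ≤ h → h ≤ g - 1 → ¬(h = g - 1 ∧ P = univ) →
    ∑ i ∈ Pᶜ, c i
      + (2 - 2 * ((g : R) - (h : R)) - ((Fintype.card ι : R) - (#P : R))) * e h P
      + ∑ j ∈ Pᶜ, e h (insert j P) = ((g : R) - (h : R)) * (∑ i ∈ P, d i) ^ 2)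

variable {g : ℕ} {d c : ι → R} {e : ℕ → Finset ι → R}

lemma intersectionSystem_iff :
    IntersectionSystem g d c e ↔
      (∀ i, (2 * (g : R) - 2) * c i + ∑ j ∈ univ \ {i}, e 0 {i, j} = (g : R) * d i ^ 2) ∧
      (∀ P : Finset ι, 2 ≤ #P →
        (2 * (g : R) - 2) * ∑ i ∈ P, c i + ((2 - 2 * (g : R)) * e 0 P + insertDiff (e 0) P) =
          (g : R) * (∑ i ∈ P, d i) ^ 2) ∧
      (∀ (h : ℕ) (P : Finset ι), 1 ≤ h → h ≤ g - 1 → ¬(h = g - 1 ∧ P = univ) →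
        ∑ i ∈ Pᶜ, c i + ((2 - 2 * ((g : R) - h)) * e h P + insertDiff (e h) P) =
          ((g : R) - h) * (∑ i ∈ P, d i) ^ 2) := by
  simp only [IntersectionSystem, add_assoc, sub_card_mul_add_sum_insert]

lemma IntersectionSystem.iff_homogeneousSystem_sub {c₁ : ι → R} {e₁ : ℕ → Finset ι → R}
    (H₁ : IntersectionSystem g d c₁ e₁) :
    IntersectionSystem g d c e ↔ HomogeneousSystem g (c - c₁) (e - e₁) := by
  obtain ⟨point₁, genus_zero₁, genus_pos₁⟩ := intersectionSystem_iff.mp H₁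
  rw [intersectionSystem_iff]
  constructor
  · rintro ⟨point, genus_zero, genus_pos⟩
    constructor
    · intro i
      simp only [Pi.sub_apply, sum_sub_distrib]
      linear_combination point i - point₁ i
    · intro P hP
      simp only [Pi.sub_apply, sum_sub_distrib, map_sub]
      linear_combination genus_zero P hP - genus_zero₁ P hP
    · intro h P h_pos h_le h_last
      simp only [Pi.sub_apply, sum_sub_distrib, map_sub]
      linear_combination genus_pos h P h_pos h_le h_last - genus_pos₁ h P h_pos h_le h_last
  · rintro ⟨point, genus_zero, genus_pos⟩
    simp only [Pi.sub_apply, sum_sub_distrib, map_sub] at point genus_zero genus_pos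
    refine ⟨fun i ↦ ?_, fun P hP ↦ ?_, fun h P h_pos h_le h_last ↦ ?_⟩
    · linear_combination point i + point₁ i
    · linear_combination genus_zero P hP + genus_zero₁ P hP
    · linear_combination genus_pos h P h_pos h_le h_last + genus_pos₁ h P h_pos h_le h_last

end IntersectionSystem

section ThetaBoundaryCoeff

variable {ι K : Type*} [Field K]

/-- The coefficient of the boundary divisor `δ_h^P` in `[s_d^*T]`, for `h < g`. At `h = g` it is
not the coefficient, which is the value at `(0, Pᶜ)`. -/
def thetaBoundaryCoeff (d : ι → K) : ℕ → Finset ι → K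
  | 0, P => -((∑ i ∈ P, d i) ^ 2 - ∑ i ∈ P, d i ^ 2) / 2
  | _ + 1, P => -(∑ i ∈ P, d i) ^ 2 / 2

lemma thetaBoundaryCoeff_zero (d : ι → K) (P : Finset ι) :
    thetaBoundaryCoeff d 0 P = -((∑ i ∈ P, d i) ^ 2 - ∑ i ∈ P, d i ^ 2) / 2 := rfl

lemma thetaBoundaryCoeff_of_pos (d : ι → K) {h : ℕ} (h_pos : 1 ≤ h) (P : Finset ι) :
    thetaBoundaryCoeff d h P = -(∑ i ∈ P, d i) ^ 2 / 2 := by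
  obtain _ | _ := h
  · omega
  · rfl

variable [Fintype ι] [DecidableEq ι]

lemma thetaBoundaryCoeff_compl {d : ι → K} (hd : ∑ i, d i = 0) {h k : ℕ} (h_pos : 1 ≤ h)
    (k_pos : 1 ≤ k) (P : Finset ι) :
    thetaBoundaryCoeff d k Pᶜ = thetaBoundaryCoeff d h P := by
  rw [thetaBoundaryCoeff_of_pos d k_pos, thetaBoundaryCoeff_of_pos d h_pos,
    sum_compl_eq_neg_sum hd, neg_sq]

lemma sum_thetaBoundaryCoeff_pair [CharZero K] {d : ι → K} (hd : ∑ i, d i = 0) (i : ι) :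
    ∑ j ∈ univ \ {i}, thetaBoundaryCoeff d 0 {i, j} = d i ^ 2 := by
  have pair : ∀ j ∈ univ \ {i}, thetaBoundaryCoeff d 0 {i, j} = -d i * d j := by
    intro j hj
    have hij : i ≠ j := by grind
    rw [thetaBoundaryCoeff_zero, sum_pair hij, sum_pair hij]
    ring
  rw [sum_congr rfl pair, ← mul_sum, ← compl_eq_univ_sdiff, sum_compl_eq_neg_sum hd,
    sum_singleton]
  ring

lemma insertDiff_thetaBoundaryCoeff_of_pos [CharZero K] {d : ι → K} (hd : ∑ i, d i = 0) {h : ℕ}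
    (h_pos : 1 ≤ h) (P : Finset ι) :
    insertDiff (thetaBoundaryCoeff d h) P = (∑ i ∈ P, d i) ^ 2 - (∑ i ∈ Pᶜ, d i ^ 2) / 2 := by
  have h_smul : thetaBoundaryCoeff d h = (-1 / 2 : K) • fun Q ↦ (∑ i ∈ Q, d i) ^ 2 := by
    ext Q
    rw [thetaBoundaryCoeff_of_pos d h_pos, Pi.smul_apply, smul_eq_mul]
    ring
  rw [h_smul, map_smul, Pi.smul_apply, smul_eq_mul, insertDiff_sq_sum hd]
  ring

lemma insertDiff_thetaBoundaryCoeff_zero [CharZero K] {d : ι → K} (hd : ∑ i, d i = 0)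
    (P : Finset ι) :
    insertDiff (thetaBoundaryCoeff d 0) P = (∑ i ∈ P, d i) ^ 2 := by
  have h_add : thetaBoundaryCoeff d 0 =
      thetaBoundaryCoeff d 1 + (1 / 2 : K) • fun Q ↦ ∑ i ∈ Q, d i ^ 2 := by
    ext Q
    rw [thetaBoundaryCoeff_zero, Pi.add_apply, thetaBoundaryCoeff_of_pos d le_rfl, Pi.smul_apply,
      smul_eq_mul]
    ring
  rw [h_add, map_add, map_smul, Pi.add_apply, Pi.smul_apply, smul_eq_mul,
    insertDiff_thetaBoundaryCoeff_of_pos hd le_rfl, insertDiff_sum]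
  ring

variable {g : ℕ} {d c : ι → K} {e : ℕ → Finset ι → K}

lemma intersectionSystem_thetaBoundaryCoeff [CharZero K] (hd : ∑ i, d i = 0) :
    IntersectionSystem g d (fun i ↦ d i ^ 2 / 2) (thetaBoundaryCoeff d) := by
  refine intersectionSystem_iff.mpr ⟨fun i ↦ ?_, fun P _ ↦ ?_, fun h P h_pos _ _ ↦ ?_⟩
  · rw [sum_thetaBoundaryCoeff_pair hd]
    ring
  · rw [insertDiff_thetaBoundaryCoeff_zero hd, thetaBoundaryCoeff_zero, ← sum_div]
    ring
  · rw [insertDiff_thetaBoundaryCoeff_of_pos hd h_pos, thetaBoundaryCoeff_of_pos d h_pos, ← sum_div]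
    ring

theorem stmt_9_general [CharZero K] (hg : 3 ≤ g) (hd : ∑ i, d i = 0)
    (hsym : ∀ P, e 1 P = e (g - 1) Pᶜ) :
    IntersectionSystem g d c e ↔
      (∀ i, c i = d i ^ 2 / 2) ∧
      (∀ P : Finset ι, 2 ≤ #P → e 0 P = -((∑ i ∈ P, d i) ^ 2 - ∑ i ∈ P, d i ^ 2) / 2) ∧
      (∀ (h : ℕ) (P : Finset ι), 1 ≤ h → h ≤ g - 1 → e h P = -(∑ i ∈ P, d i) ^ 2 / 2) := by
  have hsym_sub (P : Finset ι) :
      (e - thetaBoundaryCoeff d) 1 P = (e - thetaBoundaryCoeff d) (g - 1) Pᶜ := by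
    simp only [Pi.sub_apply, hsym P, thetaBoundaryCoeff_compl hd le_rfl (by omega : 1 ≤ g - 1) P]
  rw [(intersectionSystem_thetaBoundaryCoeff hd).iff_homogeneousSystem_sub,
    HomogeneousSystem.iff_eq_zero hg hsym_sub]
  simp +contextual only [Pi.sub_apply, sub_eq_zero, thetaBoundaryCoeff_zero,
    thetaBoundaryCoeff_of_pos]

end ThetaBoundaryCoeff

/-- Combinatorial form of the main theorem in degree zero: the system of intersection
equations with the test curves `Zᵢ`, `Z_h^P` has the coefficients of `[s_d^*T]` as its
unique solution. -/
theorem stmt_9 (g n : ℕ) (hg : 3 ≤ g) (hn : 1 ≤ n) (d : Fin n → ℤ)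
    (hd : ∑ i, d i = 0)
    (c : Fin n → ℚ) (e : ℕ → Finset (Fin n) → ℚ)
    (hsym : ∀ h ≤ g, ∀ P : Finset (Fin n), e h P = e (g - h) Pᶜ) :
    ((∀ i : Fin n,
        (2*(g:ℚ) - 2) * c i + ∑ j ∈ univ \ {i}, e 0 {i, j}
          = (g:ℚ) * (d i : ℚ)^2) ∧
     (∀ P : Finset (Fin n), 2 ≤ P.card →
        (2*(g:ℚ) - 2) * ∑ i ∈ P, c i
          + (2 - 2*(g:ℚ) - ((n:ℚ) - (P.card : ℚ))) * e 0 P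
          + ∑ j ∈ Pᶜ, e 0 (insert j P)
          = (g:ℚ) * (∑ i ∈ P, (d i : ℚ))^2) ∧
     (∀ (h : ℕ) (P : Finset (Fin n)), 1 ≤ h → h ≤ g - 1 →
        ¬(h = g - 1 ∧ P = univ) →
        ∑ i ∈ Pᶜ, c i
          + (2 - 2*((g:ℚ) - (h:ℚ)) - ((n:ℚ) - (P.card : ℚ))) * e h P
          + ∑ j ∈ Pᶜ, e h (insert j P)
          = ((g:ℚ) - (h:ℚ)) * (∑ i ∈ P, (d i : ℚ))^2))
    ↔
    ((∀ i : Fin n, c i = (d i : ℚ)^2 / 2) ∧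
     (∀ P : Finset (Fin n), 2 ≤ P.card →
        e 0 P = -((∑ i ∈ P, (d i : ℚ))^2 - ∑ i ∈ P, (d i : ℚ)^2) / 2) ∧
     (∀ (h : ℕ) (P : Finset (Fin n)), 1 ≤ h → h ≤ g - 1 →
        e h P = -(∑ i ∈ P, (d i : ℚ))^2 / 2)) := by
  simpa only [IntersectionSystem, Fintype.card_fin] using
    stmt_9_general hg (by exact_mod_cast hd) (hsym 1 (by omega))
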